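/- For every n ≥ 1 and every x ∈ ℂ, the expectation of Z_n(x) over the uniform measure on S_n equals 1 − x; that is, (1/n!)·∑_{σ∈S_n} det(I − x·g(σ)) = 1 − x. -/

import Mathlib

open scoped BigOperators

/-- The permutation matrix `g(σ) = (δ_{i,σ(j)})`. -/
noncomputable def permMat (n : ℕ) (σ : Equiv.Perm (Fin n)) : Matrix (Fin n) (Fin n) ℂ :=
  Matrix.of fun i j => if i = σ j then (1 : ℂ) else 0

/-!
Expand `det (1 - x P_σ)` by multilinearity in the rows. A term that takes at least two rows, say
`a` and `b`, from `-x P_σ` changes sign when `σ` is replaced by `σ * swap a b`, so these terms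
cancel in the sum over `σ`, and only the first-order part `1 - x tr P_σ` survives. The trace of
`P_σ` is the number of fixed points of `σ`, whose average is `1` by Burnside's lemma.
-/

open Equiv Finset

section AlternatingMap

variable {R M N ι : Type*} [Semiring R] [DecidableEq ι]

lemma piecewise_comp_mul_swap {α : Type*} {s : Finset ι} {a b : ι} (ha : a ∈ s) (hb : b ∈ s)
    (v w : ι → α) (σ : Perm ι) :
    s.piecewise (w ∘ (σ * swap a b)) v = s.piecewise (w ∘ σ) v ∘ swap a b := by
  ext i
  rcases eq_or_ne i a with rfl | hia
  · simp [ha, hb]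
  rcases eq_or_ne i b with rfl | hib
  · simp [ha, hb]
  · simp [Finset.piecewise, swap_apply_of_ne_of_ne hia hib]

variable [Fintype ι]

lemma sum_perm_map_piecewise_comp_eq_zero [AddCommMonoid M] [Module R M] [AddCommMonoid N]
    [Module R N] (f : M [⋀^ι]→ₗ[R] N) (v w : ι → M) {s : Finset ι} (hs : 1 < #s) :
    ∑ σ : Perm ι, f (s.piecewise (w ∘ σ) v) = 0 := by
  obtain ⟨a, ha, b, hb, hab⟩ := one_lt_card.mp hs
  refine sum_ninvolution (· * swap a b) (fun σ ↦ ?_) (fun σ _ ↦ ?_) (fun _ ↦ mem_univ _)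
    (mul_swap_involutive a b)
  · rw [piecewise_comp_mul_swap ha hb, add_comm, f.map_swap_add _ hab]
  · simpa [mul_eq_left] using hab

lemma sum_perm_map_add_comp [AddCommGroup M] [Module R M] [AddCommGroup N] [Module R N]
    (f : M [⋀^ι]→ₗ[R] N) (v w : ι → M) :
    ∑ σ : Perm ι, f (v + w ∘ σ) =
      ∑ σ : Perm ι, (f v + f.toMultilinearMap.linearDeriv v (w ∘ σ)) := by
  have higher_order : ∑ σ : Perm ι, ∑ s with 2 ≤ #s, f (s.piecewise (w ∘ σ) v) = 0 := by
    rw [sum_comm]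
    exact sum_eq_zero fun s hs ↦ sum_perm_map_piecewise_comp_eq_zero f v w (mem_filter.mp hs).2
  calc ∑ σ : Perm ι, f (v + w ∘ σ)
    _ = ∑ σ : Perm ι, (f v + f.toMultilinearMap.linearDeriv v (w ∘ σ) +
          ∑ s with 2 ≤ #s, f (s.piecewise (w ∘ σ) v)) :=
      sum_congr rfl fun σ _ ↦ f.toMultilinearMap.map_add_eq_map_add_linearDeriv_add v (w ∘ σ)
    _ = ∑ σ : Perm ι, (f v + f.toMultilinearMap.linearDeriv v (w ∘ σ)) := by
      rw [sum_add_distrib, higher_order, add_zero]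

end AlternatingMap

lemma sum_card_fixedBy_eq_card_of_isPretransitive (G X : Type*) [Group G] [MulAction G X]
    [MulAction.IsPretransitive G X] [Nonempty X] [Fintype G]
    [∀ g : G, Fintype (MulAction.fixedBy X g)] :
    ∑ g : G, Fintype.card (MulAction.fixedBy X g) = Fintype.card G := by
  obtain ⟨_⟩ := (MulAction.pretransitive_iff_unique_quotient_of_nonempty G X).mp inferInstance
  rw [MulAction.sum_card_fixedBy_eq_card_orbits_mul_card_group, Fintype.card_unique, one_mul]

section Matrix

variable {R ι : Type*} [Fintype ι] [DecidableEq ι]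

lemma det_updateRow_one [CommRing R] (i : ι) (u : ι → R) :
    ((1 : Matrix ι ι R).updateRow i u).det = u i := by
  rw [← Matrix.cramer_transpose_apply, Matrix.transpose_one, Matrix.cramer_one,
    Module.End.one_apply]

lemma linearDeriv_detRowAlternating_one [CommRing R] (A : Matrix ι ι R) :
    Matrix.detRowAlternating.toMultilinearMap.linearDeriv (1 : Matrix ι ι R).row A.row =
      A.trace := by
  rw [MultilinearMap.linearDeriv_apply]
  exact sum_congr rfl fun i _ ↦ det_updateRow_one i (A i)

lemma sum_perm_det_one_add_submatrix [CommRing R] (A : Matrix ι ι R) :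
    ∑ σ : Perm ι, (1 + A.submatrix σ id).det = ∑ σ : Perm ι, (1 + (A.submatrix σ id).trace) := by
  calc ∑ σ : Perm ι, (1 + A.submatrix σ id).det
    _ = ∑ σ : Perm ι, ((1 : Matrix ι ι R).det +
          Matrix.detRowAlternating.toMultilinearMap.linearDeriv
            (1 : Matrix ι ι R).row (A.submatrix σ id).row) :=
      sum_perm_map_add_comp Matrix.detRowAlternating (1 : Matrix ι ι R).row A.row
    _ = ∑ σ : Perm ι, (1 + (A.submatrix σ id).trace) := by
      simp_rw [Matrix.det_one, linearDeriv_detRowAlternating_one]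

lemma sum_perm_ncard_fixedPoints [Nonempty ι] :
    ∑ σ : Perm ι, (Function.fixedPoints σ).ncard = (Fintype.card ι).factorial := by
  rw [← Fintype.card_perm, ← sum_card_fixedBy_eq_card_of_isPretransitive (Perm ι) ι]
  exact sum_congr rfl fun σ _ ↦
    (Set.ncard_eq_toFinset_card' _).trans (Set.toFinset_card _)

lemma sum_perm_trace_permMatrix [AddCommMonoidWithOne R] [Nonempty ι] :
    ∑ σ : Perm ι, (σ.permMatrix R).trace = (Fintype.card ι).factorial := by
  simp_rw [Matrix.trace_permutation, ← Nat.cast_sum, sum_perm_ncard_fixedPoints]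

theorem expectation_Z_eq_one_sub_general [CommRing R] [Nonempty ι] (x : R) :
    ∑ σ : Perm ι, (1 - x • σ.permMatrix R).det = (Fintype.card ι).factorial * (1 - x) := by
  have submatrix_eq (σ : Perm ι) :
      ((-x) • (1 : Matrix ι ι R)).submatrix σ id = -(x • σ.permMatrix R) := by
    rw [Matrix.submatrix_smul, Pi.smul_apply, Pi.smul_apply, neg_smul, Perm.permMatrix,
      PEquiv.toMatrix_toPEquiv_eq]
  calc ∑ σ : Perm ι, (1 - x • σ.permMatrix R).det
    _ = ∑ σ : Perm ι, (1 - x * (σ.permMatrix R).trace) := by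
      simpa only [submatrix_eq, ← sub_eq_add_neg, Matrix.trace_neg, Matrix.trace_smul,
        smul_eq_mul] using sum_perm_det_one_add_submatrix ((-x) • (1 : Matrix ι ι R))
    _ = (Fintype.card ι).factorial * (1 - x) := by
      rw [sum_sub_distrib, ← mul_sum, sum_perm_trace_permMatrix, sum_const, card_univ,
        Fintype.card_perm, nsmul_one]
      ring

end Matrix

lemma permMat_eq_transpose_permMatrix (n : ℕ) (σ : Perm (Fin n)) :
    permMat n σ = (σ.permMatrix ℂ).transpose := by
  ext i j
  simp [permMat, PEquiv.toMatrix_apply, toPEquiv_apply, eq_comm]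

lemma det_one_sub_smul_permMat (n : ℕ) (σ : Perm (Fin n)) (x : ℂ) :
    (1 - x • permMat n σ).det = (1 - x • σ.permMatrix ℂ).det := by
  rw [permMat_eq_transpose_permMatrix, ← Matrix.det_transpose (1 - x • σ.permMatrix ℂ),
    Matrix.transpose_sub, Matrix.transpose_one, Matrix.transpose_smul]

/-- Corollary 2.11: for every `n ≥ 1` and `x ∈ ℂ`,
`E[Z_n(x)] = (1/n!) ∑_{σ ∈ S_n} det(I - x·g(σ)) = 1 - x`. -/
theorem expectation_Z_eq_one_sub (n : ℕ) (hn : 1 ≤ n) (x : ℂ) :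
    (1 / (n.factorial : ℂ)) *
        ∑ σ : Equiv.Perm (Fin n), Matrix.det (1 - x • permMat n σ) = 1 - x := by
  have : Nonempty (Fin n) := ⟨⟨0, hn⟩⟩
  simp_rw [det_one_sub_smul_permMat, expectation_Z_eq_one_sub_general, Fintype.card_fin]
  rw [one_div, inv_mul_cancel_left₀ (Nat.cast_ne_zero.mpr n.factorial_ne_zero)]
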